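/- Let α ∈ (0,1), p ∈ (0,∞], q ∈ [1,∞), and set ϑ = min{2/q, p/(p+1)}. Let 𝒳 be a standard Borel space and Q a probability measure on 𝒳 × ℝ with marginal Q_X on 𝒳 such that Q has an α-quantile of p-average type q; denote by t* : 𝒳 → ℝ the measurable function with t*(x) the (unique) α-quantile of Q(· | X = x), and by γ : 𝒳 → (0,∞] the function γ(x) = b_{Q(·|X=x)} · a_{Q(·|X=x)}^{q−1}, with ‖γ^{-1}‖_{p,Q_X} < ∞. Then for every measurable function ψ : 𝒳 → [−1,1]: ∫ (L^α(ψ) − L^α(t*))² dQ ≤ 2^{2−ϑ} · q^ϑ · ‖γ^{-1}‖_{p,Q_X}^ϑ · ( ∫ (L^α(ψ) − L^α(t*)) dQ )^ϑ. -/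

import Mathlib

open MeasureTheory ProbabilityTheory Real
open scoped ENNReal

/-- The quantile (pinball) loss of a prediction `t` for an outcome `y` at level `α`. -/
noncomputable def pinball (α y t : ℝ) : ℝ :=
  if t < y then α * (y - t) else (1 - α) * (t - y)

/-- The `α`-quantile set of a measure `Q` on `ℝ`. -/
def quantileSet (α : ℝ) (Q : Measure ℝ) : Set ℝ :=
  {t : ℝ | ENNReal.ofReal α ≤ Q (Set.Iic t) ∧ ENNReal.ofReal (1 - α) ≤ Q (Set.Ici t)}

/-
A quantile of type `q` with constants `(b, a)` is also one with constants
`(b (a / R) ^ (q - 1), R)` for every `R ≥ a`, because the mass near the quantile on scale `s`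
dominates the mass on scale `a s / R`. This leaves `γ = b a ^ (q - 1)` unchanged, so one may take
`a = R`, a bound for `|ψ - t*|`. For `t ≥ u` the excess pinball loss splits into
`(1_{y ≤ u} - α) (t - u)`, which has nonnegative mean when `u` is an `α`-quantile, and the gap
`(t - y) 1_{u < y < t}`, whose mean the layer-cake formula bounds below by
`∫₀^{t-u} b s ^ (q - 1) ds`; reflection gives `t ≤ u`. Hence `|ψ - t*| ^ q ≤ R ^ (q - 1) q γ⁻¹ E`
with `E` the conditional excess risk. Since the pinball loss is `1`-Lipschitz,
`(ΔL)² ≤ |ψ - t*|² ≤ R ^ (2 - q ϑ) (|ψ - t*| ^ q) ^ ϑ`, and Hölder's inequality for `γ⁻¹ ∈ L^p`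
and `E ∈ L^1` gives the result.
-/

section Pinball

variable {α t u : ℝ}

lemma measurable_pinball (α : ℝ) : Measurable fun z : ℝ × ℝ => pinball α z.1 z.2 :=
  Measurable.ite (measurableSet_lt measurable_snd measurable_fst) (by fun_prop) (by fun_prop)

lemma abs_pinball_sub_pinball_le (hα : α ∈ Set.Icc (0 : ℝ) 1) (y t u : ℝ) :
    |pinball α y t - pinball α y u| ≤ |t - u| := by
  obtain ⟨h0, h1⟩ := hα
  unfold pinball
  rcases abs_cases (t - u) with ⟨h, h'⟩ | ⟨h, h'⟩ <;> rw [h, abs_le] <;>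
    split_ifs <;> constructor <;> nlinarith

lemma pinball_one_sub_neg_neg (α y t : ℝ) : pinball (1 - α) (-y) (-t) = pinball α y t := by
  unfold pinball
  split_ifs <;> grind

lemma pinball_sub_pinball_of_le (h : u ≤ t) (y : ℝ) :
    pinball α y t - pinball α y u =
      (Set.Iic u).indicator (fun _ => t - u) y - α * (t - u) +
        (Set.Ioo u t).indicator (fun y => t - y) y := by
  simp only [pinball, Set.indicator, Set.mem_Ioo, Set.mem_Iic]
  split_ifs <;> grind

lemma integral_pinball_sub_neg (μ : Measure ℝ) (α t u : ℝ) :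
    ∫ y, (pinball (1 - α) y (-t) - pinball (1 - α) y (-u)) ∂μ.neg =
      ∫ y, (pinball α y t - pinball α y u) ∂μ := by
  refine (integral_map_equiv (MeasurableEquiv.neg ℝ) _).trans ?_
  exact integral_congr_ae (.of_forall fun y => by
    simp only [MeasurableEquiv.neg_apply, pinball_one_sub_neg_neg])

lemma integrableOn_sub_Ioo (μ : Measure ℝ) [IsFiniteMeasure μ] (t u : ℝ) :
    IntegrableOn (fun y => t - y) (Set.Ioo u t) μ :=
  (continuous_const.sub continuous_id).integrableOn_Icc.mono_set Set.Ioo_subset_Icc_self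

lemma setIntegral_sub_le_integral_pinball_sub (μ : Measure ℝ) [IsProbabilityMeasure μ]
    (hα : ENNReal.ofReal α ≤ μ (Set.Iic u)) (h : u ≤ t) :
    ∫ y in Set.Ioo u t, (t - y) ∂μ ≤ ∫ y, (pinball α y t - pinball α y u) ∂μ := by
  have hα' : α ≤ μ.real (Set.Iic u) :=
    (ENNReal.ofReal_le_iff_le_toReal (measure_ne_top μ _)).1 hα
  have h_step : Integrable ((Set.Iic u).indicator fun _ => t - u) μ :=
    (integrable_const _).indicator measurableSet_Iic
  have h_gap : Integrable ((Set.Ioo u t).indicator fun y => t - y) μ :=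
    (integrableOn_sub_Ioo μ t u).integrable_indicator measurableSet_Ioo
  calc ∫ y in Set.Ioo u t, (t - y) ∂μ
      ≤ μ.real (Set.Iic u) * (t - u) - α * (t - u) + ∫ y in Set.Ioo u t, (t - y) ∂μ := by
        nlinarith
    _ = ∫ y, (pinball α y t - pinball α y u) ∂μ := by
        simp_rw [pinball_sub_pinball_of_le h]
        rw [integral_add (by fun_prop) h_gap, integral_sub h_step (integrable_const _),
          integral_indicator_const _ measurableSet_Iic, integral_indicator measurableSet_Ioo,
          integral_const, probReal_univ, one_smul, smul_eq_mul]

end Pinball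

lemma quantileSet_subset_Icc {α l r : ℝ} (hα : α ∈ Set.Ioo (0 : ℝ) 1) {μ : Measure ℝ}
    (hμ : μ (Set.Icc l r)ᶜ = 0) : quantileSet α μ ⊆ Set.Icc l r := by
  rintro t ⟨h_left, h_right⟩
  constructor <;> by_contra! h
  · have hsub : Set.Iic t ⊆ (Set.Icc l r)ᶜ := fun y hy hy' => (hy'.1.trans hy).not_gt h
    rw [measure_mono_null hsub hμ, nonpos_iff_eq_zero, ENNReal.ofReal_eq_zero] at h_left
    exact hα.1.not_ge h_left
  · have hsub : Set.Ici t ⊆ (Set.Icc l r)ᶜ := fun y hy hy' => (hy.trans hy'.2).not_gt h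
    rw [measure_mono_null hsub hμ, nonpos_iff_eq_zero, ENNReal.ofReal_eq_zero] at h_right
    exact (sub_pos.2 hα.2).not_ge h_right

section LayerCake

lemma setIntegral_le_integral_of_le_measure_lt {Ω : Type*} [MeasurableSpace Ω] {μ : Measure Ω}
    {f : Ω → ℝ} {φ : ℝ → ℝ} {I : Set ℝ} (hf : Integrable f μ) (hf0 : 0 ≤ᵐ[μ] f)
    (hI : MeasurableSet I) (hI0 : I ⊆ Set.Ioi 0) (hφ0 : ∀ s ∈ I, 0 ≤ φ s)
    (hφ : ∀ s ∈ I, ENNReal.ofReal (φ s) ≤ μ {x | s < f x}) :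
    ∫ s in I, φ s ≤ ∫ x, f x ∂μ := by
  rw [← ENNReal.ofReal_le_ofReal_iff (integral_nonneg_of_ae hf0)]
  calc ENNReal.ofReal (∫ s in I, φ s)
      ≤ ‖∫ s in I, φ s‖ₑ := Real.ofReal_le_enorm _
    _ ≤ ∫⁻ s in I, ‖φ s‖ₑ := enorm_integral_le_lintegral_enorm _
    _ ≤ ∫⁻ s in I, μ {x | s < f x} :=
        setLIntegral_mono' hI fun s hs => (Real.enorm_of_nonneg (hφ0 s hs)).trans_le (hφ s hs)
    _ ≤ ∫⁻ s in Set.Ioi 0, μ {x | s < f x} := lintegral_mono_set hI0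
    _ = ENNReal.ofReal (∫ x, f x ∂μ) := by
        rw [ofReal_integral_eq_lintegral_ofReal hf hf0,
          lintegral_eq_lintegral_meas_lt μ hf0 hf.aemeasurable]

lemma integral_Ioo_zero_mul_sub_rpow {d q : ℝ} (c : ℝ) (hd : 0 ≤ d) (hq : 0 < q) :
    ∫ s in Set.Ioo 0 d, c * (d - s) ^ (q - 1) = c * (d ^ q / q) := by
  rw [← integral_Ioc_eq_integral_Ioo, ← intervalIntegral.integral_of_le hd,
    intervalIntegral.integral_const_mul,
    intervalIntegral.integral_comp_sub_left (fun s => s ^ (q - 1)),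
    integral_rpow (Or.inl (by linarith)), sub_self, sub_zero, sub_add_cancel,
    Real.zero_rpow hq.ne', sub_zero]

lemma mul_rpow_div_le_setIntegral_sub {μ : Measure ℝ} [IsFiniteMeasure μ] {c q t u : ℝ}
    (hc : 0 ≤ c) (hq : 0 < q) (h : u ≤ t)
    (hμ : ∀ s ∈ Set.Ioc 0 (t - u),
      ENNReal.ofReal (c * s ^ (q - 1)) ≤ μ (Set.Ioo u (u + s))) :
    c * ((t - u) ^ q / q) ≤ ∫ y in Set.Ioo u t, (t - y) ∂μ := by
  rw [← integral_Ioo_zero_mul_sub_rpow c (sub_nonneg.2 h) hq]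
  refine setIntegral_le_integral_of_le_measure_lt (integrableOn_sub_Ioo μ t u)
    ((ae_restrict_mem measurableSet_Ioo).mono fun y hy => sub_nonneg.2 hy.2.le) measurableSet_Ioo
    Set.Ioo_subset_Ioi_self
    (fun s hs => mul_nonneg hc (Real.rpow_nonneg (sub_nonneg.2 hs.2.le) _)) fun s hs => ?_
  have h_level : Set.Ioo u (u + (t - u - s)) ⊆ {y | s < t - y} ∩ Set.Ioo u t :=
    fun y hy => ⟨show s < t - y by linarith [hy.2], hy.1, by linarith [hy.2, hs.1]⟩
  calc ENNReal.ofReal (c * (t - u - s) ^ (q - 1))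
      ≤ μ (Set.Ioo u (u + (t - u - s))) :=
        hμ _ ⟨sub_pos.2 hs.2, sub_le_self _ hs.1.le⟩
    _ ≤ μ.restrict (Set.Ioo u t) {y | s < t - y} :=
        (measure_mono h_level).trans (Measure.le_restrict_apply _ _)

end LayerCake

/-- `u` is an `α`-quantile of type `q` of the probability measure `μ`, with the constants `b` and
`a` of the type condition made explicit. Uniqueness of the quantile is not a field, since the
one-sided mass bounds force it. The radius `s = 0`, where the bounds are trivial for `q > 1`, is
left out. -/
structure IsQuantileOfType (μ : Measure ℝ) (α q b a u : ℝ) : Prop where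
  mem_quantileSet : u ∈ quantileSet α μ
  coeff_pos : 0 < b
  radius_pos : 0 < a
  le_measure_Ioo : ∀ s ∈ Set.Ioc 0 a,
    ENNReal.ofReal (b * s ^ (q - 1)) ≤ μ (Set.Ioo (u - s) u) ∧
    ENNReal.ofReal (b * s ^ (q - 1)) ≤ μ (Set.Ioo u (u + s))

namespace IsQuantileOfType

variable {μ : Measure ℝ} {α q b a u t R : ℝ}

protected lemma neg (h : IsQuantileOfType μ α q b a u) :
    IsQuantileOfType μ.neg (1 - α) q b a (-u) where
  mem_quantileSet := by
    simpa [quantileSet] using h.mem_quantileSet.symm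
  coeff_pos := h.coeff_pos
  radius_pos := h.radius_pos
  le_measure_Ioo s hs := by
    simpa [add_comm, sub_eq_add_neg] using (h.le_measure_Ioo s hs).symm

lemma enlarge_radius (h : IsQuantileOfType μ α q b a u) (haR : a ≤ R) :
    IsQuantileOfType μ α q (b * (a / R) ^ (q - 1)) R u := by
  have ha : 0 < a := h.radius_pos
  have hb : 0 < b := h.coeff_pos
  have hR : 0 < R := ha.trans_le haR
  refine ⟨h.mem_quantileSet, by positivity, hR, fun s hs => ?_⟩
  have hle : a / R * s ≤ s := mul_le_of_le_one_left hs.1.le ((div_le_one hR).2 haR)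
  have hmem : a / R * s ∈ Set.Ioc 0 a := by
    refine ⟨mul_pos (by positivity) hs.1, ?_⟩
    rw [div_mul_eq_mul_div]
    exact div_le_of_le_mul₀ hR.le ha.le (mul_le_mul_of_nonneg_left hs.2 ha.le)
  rw [mul_assoc, ← Real.mul_rpow (by positivity) hs.1.le]
  obtain ⟨hleft, hright⟩ := h.le_measure_Ioo _ hmem
  exact ⟨hleft.trans (measure_mono (Set.Ioo_subset_Ioo_left (by linarith))),
    hright.trans (measure_mono (Set.Ioo_subset_Ioo_right (by linarith)))⟩

variable [IsProbabilityMeasure μ]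

lemma mul_rpow_div_le_integral_pinball_sub_of_le (h : IsQuantileOfType μ α q b a u) (hq : 0 < q)
    (hut : u ≤ t) (hta : t - u ≤ a) :
    b * ((t - u) ^ q / q) ≤ ∫ y, (pinball α y t - pinball α y u) ∂μ :=
  (mul_rpow_div_le_setIntegral_sub h.coeff_pos.le hq hut fun s hs =>
    (h.le_measure_Ioo s ⟨hs.1, hs.2.trans hta⟩).2).trans
  (setIntegral_sub_le_integral_pinball_sub μ h.mem_quantileSet.1 hut)

lemma mul_rpow_div_le_integral_pinball_sub (h : IsQuantileOfType μ α q b a u) (hq : 0 < q)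
    (hta : |t - u| ≤ a) :
    b * (|t - u| ^ q / q) ≤ ∫ y, (pinball α y t - pinball α y u) ∂μ := by
  rcases le_total u t with hut | htu
  · rw [abs_of_nonneg (sub_nonneg.2 hut)] at hta ⊢
    exact h.mul_rpow_div_le_integral_pinball_sub_of_le hq hut hta
  · rw [abs_sub_comm, abs_of_nonneg (sub_nonneg.2 htu), ← neg_sub_neg] at hta ⊢
    have : IsProbabilityMeasure μ.neg :=
      Measure.isProbabilityMeasure_map measurable_neg.aemeasurable
    rw [← integral_pinball_sub_neg]
    exact h.neg.mul_rpow_div_le_integral_pinball_sub_of_le hq (neg_le_neg htu) hta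

lemma integral_pinball_sub_nonneg (h : IsQuantileOfType μ α q b a u) (hq : 0 < q)
    (hta : |t - u| ≤ a) : 0 ≤ ∫ y, (pinball α y t - pinball α y u) ∂μ := by
  have := h.coeff_pos
  exact le_trans (by positivity) (h.mul_rpow_div_le_integral_pinball_sub hq hta)

lemma rpow_abs_sub_le (h : IsQuantileOfType μ α q b a u) (hq : 0 < q) (haR : a ≤ R)
    (htR : |t - u| ≤ R) :
    |t - u| ^ q ≤ R ^ (q - 1) * q * (b * a ^ (q - 1))⁻¹ *
      ∫ y, (pinball α y t - pinball α y u) ∂μ := by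
  have ha : 0 < a := h.radius_pos
  have hb : 0 < b := h.coeff_pos
  have hR : 0 < R := ha.trans_le haR
  calc |t - u| ^ q
      = R ^ (q - 1) * q * (b * a ^ (q - 1))⁻¹ *
          (b * (a / R) ^ (q - 1) * (|t - u| ^ q / q)) := by
        rw [Real.div_rpow ha.le hR.le]; field_simp
    _ ≤ _ := by
        gcongr
        exact (h.enlarge_radius haR).mul_rpow_div_le_integral_pinball_sub hq htR

end IsQuantileOfType

section Holder

variable {Ω E F G : Type*} [MeasurableSpace Ω] [NormedAddCommGroup E] [NormedAddCommGroup F]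
  [NormedAddCommGroup G] {μ : Measure Ω} {f : Ω → E} {g : Ω → F} {k : Ω → G} {p r s : ℝ≥0∞}

lemma eLpNorm_le_eLpNorm_mul_eLpNorm_of_norm_le_mul [ENNReal.HolderTriple p s r]
    (hf : AEStronglyMeasurable f μ) (hk : AEStronglyMeasurable k μ)
    (h : ∀ᵐ x ∂μ, ‖f x‖ ≤ ‖g x‖ * ‖k x‖) :
    eLpNorm f r μ ≤ eLpNorm g p μ * eLpNorm k s μ := by
  -- Hölder is applied to the measurable quotient `‖f‖ / ‖k‖ ≤ ‖g‖`, as `g` may not be measurable.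
  set w : Ω → ℝ := fun x => ‖f x‖ / ‖k x‖
  have hw : AEStronglyMeasurable w μ :=
    (hf.norm.aemeasurable.div hk.norm.aemeasurable).aestronglyMeasurable
  have hfw : ∀ᵐ x ∂μ, ‖f x‖ = w x * ‖k x‖ := by
    filter_upwards [h] with x hx
    refine (div_mul_cancel_of_imp fun hk0 => ?_).symm
    rw [hk0, mul_zero] at hx
    exact le_antisymm hx (norm_nonneg _)
  have hwg : ∀ᵐ x ∂μ, ‖w x‖ ≤ ‖g x‖ := by
    filter_upwards [h] with x hx
    rw [Real.norm_of_nonneg (by positivity)]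
    exact div_le_of_le_mul₀ (norm_nonneg _) (norm_nonneg _) hx
  calc eLpNorm f r μ = eLpNorm (w • fun x => ‖k x‖) r μ := by
        rw [← eLpNorm_norm]; exact eLpNorm_congr_ae hfw
    _ ≤ eLpNorm w p μ * eLpNorm (fun x => ‖k x‖) s μ := eLpNorm_smul_le_mul_eLpNorm hk.norm hw
    _ ≤ eLpNorm g p μ * eLpNorm k s μ := by
        rw [eLpNorm_norm]; gcongr; exact eLpNorm_mono_ae hwg

lemma integral_norm_rpow_le_of_eLpNorm_le {ϑ C : ℝ} (hf : AEStronglyMeasurable f μ) (hϑ : 0 < ϑ)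
    (hC : 0 ≤ C) (h : eLpNorm f (ENNReal.ofReal ϑ) μ ≤ ENNReal.ofReal C) :
    ∫ x, ‖f x‖ ^ ϑ ∂μ ≤ C ^ ϑ := by
  have hϑ' : ENNReal.ofReal ϑ ≠ 0 := (ENNReal.ofReal_pos.2 hϑ).ne'
  have hmem : MemLp f (ENNReal.ofReal ϑ) μ := ⟨hf, h.trans_lt ENNReal.ofReal_lt_top⟩
  rw [hmem.eLpNorm_eq_integral_rpow_norm hϑ' ENNReal.ofReal_ne_top,
    ENNReal.ofReal_le_ofReal_iff hC, ENNReal.toReal_ofReal hϑ.le] at h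
  exact (Real.rpow_inv_le_iff_of_pos (by positivity) hC hϑ).1 h

lemma integral_norm_rpow_le_of_norm_le_mul [IsProbabilityMeasure μ] [ENNReal.HolderTriple p 1 r]
    {ϑ : ℝ} (hϑ : 0 < ϑ) (hϑr : ENNReal.ofReal ϑ ≤ r) (hf : AEStronglyMeasurable f μ)
    (hg : eLpNorm g p μ ≠ ∞) (hk : Integrable k μ) (h : ∀ᵐ x ∂μ, ‖f x‖ ≤ ‖g x‖ * ‖k x‖) :
    ∫ x, ‖f x‖ ^ ϑ ∂μ ≤ ((eLpNorm g p μ).toReal * ∫ x, ‖k x‖ ∂μ) ^ ϑ := by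
  refine integral_norm_rpow_le_of_eLpNorm_le hf hϑ (by positivity) ?_
  calc eLpNorm f (ENNReal.ofReal ϑ) μ
      ≤ eLpNorm f r μ := eLpNorm_le_eLpNorm_of_exponent_le hϑr hf
    _ ≤ eLpNorm g p μ * eLpNorm k 1 μ :=
        eLpNorm_le_eLpNorm_mul_eLpNorm_of_norm_le_mul hf hk.aestronglyMeasurable h
    _ = ENNReal.ofReal ((eLpNorm g p μ).toReal * ∫ x, ‖k x‖ ∂μ) := by
        rw [ENNReal.ofReal_mul ENNReal.toReal_nonneg, ENNReal.ofReal_toReal hg,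
          eLpNorm_one_eq_lintegral_enorm, ofReal_integral_norm_eq_lintegral_enorm hk]

end Holder

lemma ofReal_ite_div_add_one (p : ℝ≥0∞) :
    ENNReal.ofReal (if p = ∞ then 1 else p.toReal / (p.toReal + 1)) = (p⁻¹ + 1)⁻¹ := by
  split_ifs with hp
  · simp [hp]
  rcases eq_or_ne p 0 with rfl | hp0
  · simp
  rw [ENNReal.ofReal_div_of_pos (by positivity), ENNReal.ofReal_add (by positivity) zero_le_one,
    ENNReal.ofReal_toReal hp, ENNReal.ofReal_one, ← ENNReal.inv_div (.inl hp) (.inl hp0),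
    ENNReal.add_div, ENNReal.div_self hp0 hp, one_div, add_comm]

lemma sq_le_rpow_mul_rpow {d R q ϑ : ℝ} (hd : 0 ≤ d) (hdR : d ≤ R) (hϑ : q * ϑ ≤ 2) :
    d ^ 2 ≤ R ^ (2 - q * ϑ) * (d ^ q) ^ ϑ := by
  rcases hd.eq_or_lt with rfl | hd0
  · rw [zero_pow two_ne_zero]
    positivity
  · calc d ^ 2 = d ^ (2 - q * ϑ) * (d ^ q) ^ ϑ := by
          rw [← Real.rpow_mul hd, ← Real.rpow_add hd0, sub_add_cancel, Real.rpow_two]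
      _ ≤ R ^ (2 - q * ϑ) * (d ^ q) ^ ϑ := by gcongr

section CondKernel

variable {𝒳 𝒴 E : Type*} [MeasurableSpace 𝒳] [MeasurableSpace 𝒴] [NormedAddCommGroup E]
  [NormedSpace ℝ E] {Q : Measure (𝒳 × 𝒴)} [SFinite Q] {κ : Kernel 𝒳 𝒴} [IsSFiniteKernel κ]
  [Q.IsCondKernel κ] {f : 𝒳 × 𝒴 → E}

lemma integrable_integral_of_isCondKernel (hf : Integrable f Q) :
    Integrable (fun x => ∫ y, f (x, y) ∂κ x) Q.fst := by
  rw [← Q.disintegrate κ] at hf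
  simpa using! hf.integral_compProd

lemma integral_integral_of_isCondKernel (hf : Integrable f Q) :
    ∫ x, ∫ y, f (x, y) ∂κ x ∂Q.fst = ∫ o, f o ∂Q := by
  rw [← Q.disintegrate κ] at hf
  rw [← Measure.integral_compProd hf, Q.disintegrate κ]

instance isCondKernel_condDistrib_snd_fst [StandardBorelSpace 𝒴] [Nonempty 𝒴]
    (Q : Measure (𝒳 × 𝒴)) [IsFiniteMeasure Q] :
    Q.IsCondKernel (condDistrib Prod.snd Prod.fst Q) where
  disintegrate :=
    (compProd_map_condDistrib measurable_snd.aemeasurable).trans Measure.map_id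

end CondKernel

section VarianceBound

variable {𝒳 : Type*} [MeasurableSpace 𝒳] {Q : Measure (𝒳 × ℝ)} {α R : ℝ} {ψ φ : 𝒳 → ℝ}

lemma integrable_pinball_sub [IsFiniteMeasure Q] (hα : α ∈ Set.Icc (0 : ℝ) 1) (hψ : Measurable ψ)
    (hφ : Measurable φ) (hR : ∀ᵐ x ∂Q.fst, |ψ x - φ x| ≤ R) :
    Integrable (fun o => pinball α o.2 (ψ o.1) - pinball α o.2 (φ o.1)) Q := by
  refine Integrable.of_bound (Measurable.aestronglyMeasurable ?_) R ?_
  · exact ((measurable_pinball α).comp (measurable_snd.prodMk (hψ.comp measurable_fst))).sub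
      ((measurable_pinball α).comp (measurable_snd.prodMk (hφ.comp measurable_fst)))
  · filter_upwards [ae_of_ae_map measurable_fst.aemeasurable hR] with o ho
    exact (abs_pinball_sub_pinball_le hα _ _ _).trans ho

lemma integral_sq_pinball_sub_le [IsFiniteMeasure Q] {q ϑ : ℝ} (hα : α ∈ Set.Icc (0 : ℝ) 1)
    (hψ : Measurable ψ) (hφ : Measurable φ) (hR : ∀ᵐ x ∂Q.fst, |ψ x - φ x| ≤ R) (hq : 0 ≤ q)
    (hϑ0 : 0 ≤ ϑ) (hϑ : q * ϑ ≤ 2) :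
    ∫ o, (pinball α o.2 (ψ o.1) - pinball α o.2 (φ o.1)) ^ 2 ∂Q ≤
      R ^ (2 - q * ϑ) * ∫ x, (|ψ x - φ x| ^ q) ^ ϑ ∂Q.fst := by
  have h_int : Integrable (fun x => (|ψ x - φ x| ^ q) ^ ϑ) Q.fst := by
    refine Integrable.of_bound (Measurable.aestronglyMeasurable (by fun_prop)) ((R ^ q) ^ ϑ) ?_
    filter_upwards [hR] with x hx
    rw [Real.norm_of_nonneg (by positivity)]
    gcongr
  calc ∫ o, (pinball α o.2 (ψ o.1) - pinball α o.2 (φ o.1)) ^ 2 ∂Q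
      ≤ ∫ o, R ^ (2 - q * ϑ) * (|ψ o.1 - φ o.1| ^ q) ^ ϑ ∂Q := by
        refine integral_mono_of_nonneg (.of_forall fun o => sq_nonneg _)
          ((h_int.comp_measurable measurable_fst).const_mul _) ?_
        filter_upwards [ae_of_ae_map measurable_fst.aemeasurable hR] with o ho
        calc (pinball α o.2 (ψ o.1) - pinball α o.2 (φ o.1)) ^ 2
            ≤ |ψ o.1 - φ o.1| ^ 2 :=
              sq_le_sq.2 ((abs_pinball_sub_pinball_le hα _ _ _).trans (le_abs_self _))
          _ ≤ R ^ (2 - q * ϑ) * (|ψ o.1 - φ o.1| ^ q) ^ ϑ :=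
              sq_le_rpow_mul_rpow (abs_nonneg _) ho hϑ
    _ = R ^ (2 - q * ϑ) * ∫ x, (|ψ x - φ x| ^ q) ^ ϑ ∂Q.fst := by
        rw [integral_const_mul, Measure.fst,
          integral_map measurable_fst.aemeasurable h_int.aestronglyMeasurable]

variable {κ : Kernel 𝒳 ℝ} [IsMarkovKernel κ] [Q.IsCondKernel κ]
  {q ϑ : ℝ} {p r : ℝ≥0∞} {b a : 𝒳 → ℝ}

lemma integral_pinball_sub_nonneg [IsFiniteMeasure Q] (hα : α ∈ Set.Icc (0 : ℝ) 1) (hq : 0 < q)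
    (hψ : Measurable ψ) (hφ : Measurable φ) (hR : ∀ᵐ x ∂Q.fst, |ψ x - φ x| ≤ R)
    (htype : ∀ᵐ x ∂Q.fst, IsQuantileOfType (κ x) α q (b x) (a x) (φ x))
    (haR : ∀ᵐ x ∂Q.fst, a x ≤ R) :
    0 ≤ ∫ o, (pinball α o.2 (ψ o.1) - pinball α o.2 (φ o.1)) ∂Q := by
  rw [← integral_integral_of_isCondKernel (κ := κ) (integrable_pinball_sub hα hψ hφ hR)]
  refine integral_nonneg_of_ae ?_
  filter_upwards [hR, htype, haR] with x hx h hax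
  exact (h.enlarge_radius hax).integral_pinball_sub_nonneg hq hx

lemma integral_rpow_abs_sub_rpow_le [IsProbabilityMeasure Q] [ENNReal.HolderTriple p 1 r]
    (hα : α ∈ Set.Icc (0 : ℝ) 1) (hq : 0 < q) (hϑ : 0 < ϑ) (hϑr : ENNReal.ofReal ϑ ≤ r)
    (hψ : Measurable ψ) (hφ : Measurable φ) (hR : ∀ᵐ x ∂Q.fst, |ψ x - φ x| ≤ R) (hR0 : 0 ≤ R)
    (htype : ∀ᵐ x ∂Q.fst, IsQuantileOfType (κ x) α q (b x) (a x) (φ x))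
    (haR : ∀ᵐ x ∂Q.fst, a x ≤ R)
    (hγ : eLpNorm (fun x => (b x * a x ^ (q - 1))⁻¹) p Q.fst ≠ ∞) :
    ∫ x, (|ψ x - φ x| ^ q) ^ ϑ ∂Q.fst ≤
      (R ^ (q - 1) * q * (eLpNorm (fun x => (b x * a x ^ (q - 1))⁻¹) p Q.fst).toReal *
        ∫ o, (pinball α o.2 (ψ o.1) - pinball α o.2 (φ o.1)) ∂Q) ^ ϑ := by
  set γinv : 𝒳 → ℝ := fun x => (b x * a x ^ (q - 1))⁻¹
  set risk : 𝒳 → ℝ := fun x => ∫ y, (pinball α y (ψ x) - pinball α y (φ x)) ∂κ x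
  set K : ℝ := R ^ (q - 1) * q
  have h_loss := integrable_pinball_sub hα hψ hφ hR
  have h_risk : Integrable risk Q.fst := integrable_integral_of_isCondKernel h_loss
  have h_risk_nonneg : ∀ᵐ x ∂Q.fst, ‖K * risk x‖ = K * risk x := by
    filter_upwards [hR, htype, haR] with x hx h hax
    exact Real.norm_of_nonneg (mul_nonneg (by positivity)
      ((h.enlarge_radius hax).integral_pinball_sub_nonneg hq hx))
  have h_calibration : ∀ᵐ x ∂Q.fst, ‖|ψ x - φ x| ^ q‖ ≤ ‖γinv x‖ * ‖K * risk x‖ := by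
    filter_upwards [hR, htype, haR] with x hx h hax
    rw [← norm_mul, Real.norm_of_nonneg (by positivity), mul_left_comm, ← mul_assoc]
    exact (h.rpow_abs_sub_le hq hax hx).trans (Real.le_norm_self _)
  calc ∫ x, (|ψ x - φ x| ^ q) ^ ϑ ∂Q.fst
      = ∫ x, ‖|ψ x - φ x| ^ q‖ ^ ϑ ∂Q.fst := by
        simp only [Real.norm_of_nonneg (Real.rpow_nonneg (abs_nonneg _) q)]
    _ ≤ ((eLpNorm γinv p Q.fst).toReal * ∫ x, ‖K * risk x‖ ∂Q.fst) ^ ϑ :=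
        integral_norm_rpow_le_of_norm_le_mul hϑ hϑr
          ((hψ.sub hφ).abs.pow_const q).aestronglyMeasurable hγ (h_risk.const_mul K) h_calibration
    _ = _ := by
        rw [integral_congr_ae h_risk_nonneg, integral_const_mul,
          integral_integral_of_isCondKernel h_loss, mul_left_comm, ← mul_assoc]

end VarianceBound

theorem stmt8_general {𝒳 : Type*} [MeasurableSpace 𝒳] {α : ℝ} (hα : α ∈ Set.Icc (0 : ℝ) 1)
    {p : ℝ≥0∞} (hp : 0 < p) {q : ℝ} (hq : 0 < q)
    {ϑ : ℝ} (hϑ : ϑ = min (2 / q) (if p = ∞ then 1 else p.toReal / (p.toReal + 1)))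
    {Q : Measure (𝒳 × ℝ)} [IsProbabilityMeasure Q]
    {κ : Kernel 𝒳 ℝ} [IsMarkovKernel κ] [Q.IsCondKernel κ] {R : ℝ}
    {tstar : 𝒳 → ℝ} (htstar : Measurable tstar) {b a : 𝒳 → ℝ}
    (htype : ∀ᵐ x ∂Q.fst, IsQuantileOfType (κ x) α q (b x) (a x) (tstar x))
    (haR : ∀ᵐ x ∂Q.fst, a x ≤ R)
    (hγ : eLpNorm (fun x => (b x * a x ^ (q - 1))⁻¹) p Q.fst ≠ ∞)
    {ψ : 𝒳 → ℝ} (hψ : Measurable ψ) (hR : ∀ᵐ x ∂Q.fst, |ψ x - tstar x| ≤ R) :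
    ∫ o, (pinball α o.2 (ψ o.1) - pinball α o.2 (tstar o.1)) ^ 2 ∂Q ≤
      R ^ (2 - ϑ) * q ^ ϑ *
        (eLpNorm (fun x => (b x * a x ^ (q - 1))⁻¹) p Q.fst).toReal ^ ϑ *
        (∫ o, (pinball α o.2 (ψ o.1) - pinball α o.2 (tstar o.1)) ∂Q) ^ ϑ := by
  have hr : ENNReal.HolderTriple p 1 (p⁻¹ + 1)⁻¹ := ⟨by simp⟩
  have hϑr : ENNReal.ofReal ϑ ≤ (p⁻¹ + 1)⁻¹ := by
    rw [← ofReal_ite_div_add_one, hϑ]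
    exact ENNReal.ofReal_le_ofReal (min_le_right _ _)
  have hϑ0 : 0 < ϑ := by
    rw [hϑ, lt_min_iff, ← ENNReal.ofReal_pos (p := ite _ _ _), ofReal_ite_div_add_one]
    exact ⟨by positivity, by simp [hp.ne']⟩
  have hϑq : q * ϑ ≤ 2 := by
    rw [← le_div_iff₀' hq, hϑ]
    exact min_le_left _ _
  have h_excess := integral_pinball_sub_nonneg hα hq hψ htstar hR htype haR
  obtain ⟨x, hx, hax⟩ := (htype.and haR).exists
  have hR0 : 0 < R := hx.radius_pos.trans_le hax
  set Γ := (eLpNorm (fun x => (b x * a x ^ (q - 1))⁻¹) p Q.fst).toReal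
  have hΓ : 0 ≤ Γ := ENNReal.toReal_nonneg
  calc ∫ o, (pinball α o.2 (ψ o.1) - pinball α o.2 (tstar o.1)) ^ 2 ∂Q
      ≤ R ^ (2 - q * ϑ) * ∫ x, (|ψ x - tstar x| ^ q) ^ ϑ ∂Q.fst :=
        integral_sq_pinball_sub_le hα hψ htstar hR hq.le hϑ0.le hϑq
    _ ≤ R ^ (2 - q * ϑ) * (R ^ (q - 1) * q * Γ *
          ∫ o, (pinball α o.2 (ψ o.1) - pinball α o.2 (tstar o.1)) ∂Q) ^ ϑ := by
        gcongr
        exact integral_rpow_abs_sub_rpow_le hα hq hϑ0 hϑr hψ htstar hR hR0.le htype haR hγ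
    _ = _ := by
        rw [Real.mul_rpow (by positivity) h_excess, Real.mul_rpow (by positivity) hΓ,
          Real.mul_rpow (by positivity) hq.le, ← Real.rpow_mul hR0.le,
          show 2 - ϑ = 2 - q * ϑ + (q - 1) * ϑ by ring, Real.rpow_add hR0]
        ring

/-- Steinwart–Christmann variance bound for the quantile loss: if `Q` has an `α`-quantile
of `p`-average type `q` (conditional quantiles `t*`, type-`q` constants `b_Q(x)`, `a_Q(x)`,
`γ(x) = b_Q(x) a_Q(x)^{q-1}` with `‖γ⁻¹‖_{p,Q_X} < ∞`), then for every measurable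
`ψ : 𝒳 → [-1,1]`,
`∫ (ΔL)² dQ ≤ 2^{2-ϑ} q^ϑ ‖γ⁻¹‖_{p,Q_X}^ϑ (∫ ΔL dQ)^ϑ` where `ϑ = min{2/q, p/(p+1)}`. -/
theorem stmt8 {𝒳 : Type*} [MeasurableSpace 𝒳] [StandardBorelSpace 𝒳]
    (α : ℝ) (hα : α ∈ Set.Ioo (0 : ℝ) 1)
    (p : ℝ≥0∞) (hp : 0 < p) (q : ℝ) (hq : 1 ≤ q)
    (ϑ : ℝ) (hϑ : ϑ = min (2 / q) (if p = ∞ then 1 else p.toReal / (p.toReal + 1)))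
    (Q : Measure (𝒳 × ℝ)) [IsProbabilityMeasure Q]
    -- conditional supports contained in `[-1, 1]`
    (hsupp : ∀ᵐ x ∂(Q.map Prod.fst),
      condDistrib Prod.snd Prod.fst Q x (Set.Icc (-1 : ℝ) 1)ᶜ = 0)
    -- the conditional `α`-quantile is almost surely the unique point `t* x`
    (tstar : 𝒳 → ℝ) (htstar : Measurable tstar)
    (hsingleton : ∀ᵐ x ∂(Q.map Prod.fst),
      quantileSet α (condDistrib Prod.snd Prod.fst Q x) = {tstar x})
    -- the conditional distributions have `α`-quantiles of type `q`
    (bQ aQ : 𝒳 → ℝ)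
    (htype : ∀ᵐ x ∂(Q.map Prod.fst),
      0 < bQ x ∧ aQ x ∈ Set.Ioc (0 : ℝ) 2 ∧
      ∀ s ∈ Set.Icc (0 : ℝ) (aQ x),
        ENNReal.ofReal (bQ x * s ^ (q - 1)) ≤
          condDistrib Prod.snd Prod.fst Q x (Set.Ioo (tstar x - s) (tstar x)) ∧
        ENNReal.ofReal (bQ x * s ^ (q - 1)) ≤
          condDistrib Prod.snd Prod.fst Q x (Set.Ioo (tstar x) (tstar x + s)))
    -- `γ⁻¹` has finite `L^p(Q_X)`-norm `Γ`
    (Γ : ℝ)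
    (hΓfin : eLpNorm (fun x => (bQ x * aQ x ^ (q - 1))⁻¹) p (Q.map Prod.fst) ≠ ∞)
    (hΓ : Γ = (eLpNorm (fun x => (bQ x * aQ x ^ (q - 1))⁻¹) p (Q.map Prod.fst)).toReal)
    (ψ : 𝒳 → ℝ) (hψ : Measurable ψ) (hψbdd : ∀ x, ψ x ∈ Set.Icc (-1 : ℝ) 1) :
    (∫ o, (pinball α o.2 (ψ o.1) - pinball α o.2 (tstar o.1)) ^ 2 ∂Q) ≤
      2 ^ (2 - ϑ) * q ^ ϑ * Γ ^ ϑ *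
        (∫ o, (pinball α o.2 (ψ o.1) - pinball α o.2 (tstar o.1)) ∂Q) ^ ϑ := by
  rw [hΓ]
  refine stmt8_general (Set.Ioo_subset_Icc_self hα) hp (by linarith) hϑ
    (κ := condDistrib Prod.snd Prod.fst Q) htstar ?_ (htype.mono fun x h => h.2.1.2) hΓfin hψ ?_
  · filter_upwards [hsingleton, htype] with x hx ⟨hb, ha, h⟩
    exact ⟨hx.ge rfl, hb, ha.1, fun s hs => h s (Set.Ioc_subset_Icc_self hs)⟩
  · filter_upwards [hsupp, hsingleton] with x hx hx'
    exact (Real.dist_le_of_mem_Icc (hψbdd x) (quantileSet_subset_Icc hα hx (hx'.ge rfl))).trans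
      (by norm_num)
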